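/- Let A and B be unital complex Banach algebras with B semisimple, I ⊆ A and J ⊆ B proper closed two-sided ideals, and T : A → B linear, essentially spectrally bounded with constant M (r(Tx + J) ≤ M·r(x + I) for all x) and surjective modulo J. Then for every x ∈ I, the coset Tx + J lies in the Jacobson radical of B/J; in particular, if B/J is semisimple then T(I) ⊆ J. -/

import Mathlib

open scoped ENNReal NNReal

/-- The quotient of a complex algebra by a two-sided ideal is a complex algebra. -/
noncomputable instance TwoSidedIdeal.quotientAlgebra {A : Type*} [Ring A] [Algebra ℂ A]
    (I : TwoSidedIdeal A) : Algebra ℂ I.ringCon.Quotient :=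
  (I.ringCon.mk'.comp (algebraMap ℂ A)).toAlgebra' (by
    intro c x
    induction x using Quotient.ind
    rename_i a
    show I.ringCon.mk' (algebraMap ℂ A c) * I.ringCon.mk' a =
      I.ringCon.mk' a * I.ringCon.mk' (algebraMap ℂ A c)
    rw [← map_mul, ← map_mul, Algebra.commutes])

/-!
An entire function `F` for which `r (F z)` is bounded has constant `r (F z)` (Vesentini). For
`x ∈ I`, put `b = T x + J` and write `y ∈ B / J` as `T w + J`: then `r (z b + y) ≤ M r (w + I)` for
all `z ∈ ℂ`, so `r (b + y) = r y`. With `y = 0` and `y = u b u⁻¹ - b` this shows that `b` and every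
`u b u⁻¹ - b` are quasinilpotent.

Let `L` be a maximal left ideal. If `L b ⊆ L`, then `b` acts on the simple module `(B / J) / L` by
an endomorphism, which is a scalar `k`; as `b - k ∈ L`, `k` is in the spectrum of `b`, so `k = 0`
and `b ∈ L`. Otherwise some `x ∈ L` has `x b - 1 ∈ L`; then for `u = 1 + t x` with small `t ≠ 0` one
gets `u b u⁻¹ - b - t ∈ L`, which puts `t` in the spectrum of the quasinilpotent `u b u⁻¹ - b`.
-/

open Filter Topology

section SpectralRadius

variable {𝕜 A : Type*} [NormedField 𝕜]

theorem spectralRadius_smul [Ring A] [Algebra 𝕜 A] (k : 𝕜) (a : A) :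
    spectralRadius 𝕜 (k • a) = ‖k‖₊ * spectralRadius 𝕜 a := by
  rcases eq_or_ne k 0 with rfl | hk
  · simp only [zero_smul, spectrum.spectralRadius_zero, nnnorm_zero, ENNReal.coe_zero, zero_mul]
  · have smul_spectrum : spectrum 𝕜 (k • a) = (k * ·) '' spectrum 𝕜 a :=
      spectrum.unit_smul_eq_smul a (Units.mk0 k hk)
    simp only [spectralRadius, smul_spectrum, iSup_image, nnnorm_mul, ENNReal.coe_mul,
      ENNReal.mul_iSup]

theorem spectralRadius_pow [IsAlgClosed 𝕜] [Ring A] [Algebra 𝕜 A] (a : A) {n : ℕ} (hn : n ≠ 0) :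
    spectralRadius 𝕜 (a ^ n) = spectralRadius 𝕜 a ^ n := by
  simp only [spectralRadius, spectrum.map_pow_of_pos a (Nat.pos_of_ne_zero hn), iSup_image,
    nnnorm_pow, ENNReal.coe_pow, ENNReal.iSup_pow_of_ne_zero hn]

theorem spectralRadius_inv_smul_pow [IsAlgClosed 𝕜] [Ring A] [Algebra 𝕜 A] (z : 𝕜) (a : A) {n : ℕ}
    (hn : n ≠ 0) :
    spectralRadius 𝕜 (z⁻¹ • a ^ n) = (‖z‖₊⁻¹ : ℝ≥0) * spectralRadius 𝕜 a ^ n := by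
  rw [spectralRadius_smul, spectralRadius_pow _ hn, nnnorm_inv]

theorem eventually_cobounded_spectralRadius_inv_smul_pow_le [IsAlgClosed 𝕜] [Ring A]
    [Algebra 𝕜 A] {F : 𝕜 → A} {K d : ℝ≥0}
    (hK : ∀ z, spectralRadius 𝕜 (F z) ≤ K) (hd : 0 < d) {n : ℕ} (hn : n ≠ 0) :
    ∀ᶠ z in Bornology.cobounded 𝕜, spectralRadius 𝕜 (z⁻¹ • F z ^ n) ≤ d := by
  have htend : Tendsto (fun z : 𝕜 ↦ ‖z⁻¹‖₊ * K ^ n) (Bornology.cobounded 𝕜) (𝓝 0) := by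
    simpa using (tendsto_inv₀_cobounded (α := 𝕜)).nnnorm.mul_const (K ^ n)
  filter_upwards [htend.eventually_lt_const hd] with z hz
  calc spectralRadius 𝕜 (z⁻¹ • F z ^ n)
      = (‖z‖₊⁻¹ : ℝ≥0) * spectralRadius 𝕜 (F z) ^ n := spectralRadius_inv_smul_pow z _ hn
    _ ≤ (‖z‖₊⁻¹ : ℝ≥0) * (K : ℝ≥0∞) ^ n := by
      gcongr
      exact hK z
    _ ≤ d := by
      rw [nnnorm_inv] at hz
      exact_mod_cast hz.le

theorem spectralRadius_units_conjugate [Ring A] [Algebra 𝕜 A] (u : Aˣ) (a : A) :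
    spectralRadius 𝕜 (u * a * ↑u⁻¹) = spectralRadius 𝕜 a := by
  simp only [spectralRadius, spectrum.units_conjugate]

theorem spectralRadius_algHom_apply_le {B : Type*} [Ring A] [Algebra 𝕜 A] [Ring B] [Algebra 𝕜 B]
    (f : A →ₐ[𝕜] B) (a : A) : spectralRadius 𝕜 (f a) ≤ spectralRadius 𝕜 a :=
  biSup_mono (AlgHom.spectrum_apply_subset f a)

variable [NormedRing A] [NormedAlgebra 𝕜 A] [CompleteSpace A]

theorem spectralRadius_le_nnnorm_of_complete (a : A) : spectralRadius 𝕜 a ≤ ‖a‖₊ := by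
  refine (spectrum.spectralRadius_le_liminf_pow_nnnorm_pow_one_div 𝕜 a).trans
    (liminf_le_of_frequently_le' (Eventually.frequently ?_))
  filter_upwards [eventually_gt_atTop 0] with n hn
  calc (‖a ^ n‖₊ : ℝ≥0∞) ^ (1 / n : ℝ)
      ≤ ((‖a‖₊ : ℝ≥0∞) ^ n) ^ (1 / n : ℝ) := by
        gcongr
        exact_mod_cast nnnorm_pow_le' a hn
    _ = ‖a‖₊ := by rw [one_div, ENNReal.pow_rpow_inv_natCast hn.ne']

theorem spectralRadius_le_of_nnnorm_pow_le {a : A} {c : ℝ≥0} {n : ℕ} (hn : n ≠ 0)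
    (h : ‖a ^ n‖₊ ≤ c ^ n) : spectralRadius 𝕜 a ≤ c := by
  rw [← ENNReal.pow_le_pow_left_iff hn]
  calc spectralRadius 𝕜 a ^ n
      ≤ spectralRadius 𝕜 (a ^ n) := spectrum.spectralRadius_pow_le a n hn
    _ ≤ ‖a ^ n‖₊ := spectralRadius_le_nnnorm_of_complete _
    _ ≤ (c : ℝ≥0∞) ^ n := by exact_mod_cast h

end SpectralRadius

theorem le_of_forall_pow_le_mul_pow {k : Type*} [Semifield k] [LinearOrder k]
    [IsStrictOrderedRing k] [ExistsAddOfLE k] [Archimedean k] {x a c : k} (hc : 0 < c)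
    (h : ∀ n ≠ 0, x ^ n ≤ a * c ^ n) : x ≤ c := by
  by_contra! hlt
  obtain ⟨n, hn⟩ := pow_unbounded_of_one_lt (max a 1) ((one_lt_div hc).2 hlt)
  have hn0 : n ≠ 0 := by
    rintro rfl
    simp at hn
  rw [div_pow, lt_div_iff₀ (by positivity)] at hn
  exact (h n hn0).not_gt (lt_of_le_of_lt (by gcongr; exact le_max_left _ _) hn)

section Subharmonicity

variable {A : Type*} [NormedRing A] [NormedAlgebra ℂ A] [CompleteSpace A]

theorem exists_nnnorm_pow_lt_of_spectralRadius_lt {a : A} {c : ℝ≥0}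
    (h : spectralRadius ℂ a < c) : ∃ n ≠ 0, ‖a ^ n‖₊ < c ^ n := by
  obtain ⟨n, hlt, hn⟩ :=
    (((spectrum.pow_nnnorm_pow_one_div_tendsto_nhds_spectralRadius a).eventually_lt_const h).and
      (eventually_ne_atTop 0)).exists
  refine ⟨n, hn, ?_⟩
  rw [one_div, ENNReal.rpow_inv_lt_iff (by positivity), ENNReal.rpow_natCast] at hlt
  exact_mod_cast hlt

theorem upperSemicontinuous_spectralRadius :
    UpperSemicontinuous (fun a : A ↦ spectralRadius ℂ a) := by
  intro a c hac
  obtain ⟨d, had, hdc⟩ := ENNReal.lt_iff_exists_nnreal_btwn.1 hac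
  obtain ⟨n, hn, hlt⟩ := exists_nnnorm_pow_lt_of_spectralRadius_lt had
  have hcont : Continuous fun x : A ↦ ‖x ^ n‖₊ := by fun_prop
  filter_upwards [hcont.continuousAt.eventually_lt_const hlt] with x hx
  exact (spectralRadius_le_of_nnnorm_pow_le hn hx.le).trans_lt hdc

theorem exists_forall_nnnorm_pow_le_of_isCompact {X : Type*} [TopologicalSpace X] {K : Set X}
    (hK : IsCompact K) {F : X → A} (hF : ContinuousOn F K) {c : ℝ≥0}
    (h : ∀ x ∈ K, spectralRadius ℂ (F x) < c) :
    ∃ n ≠ 0, ∀ x ∈ K, ‖F x ^ n‖₊ ≤ c ^ n := by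
  have pow_mul_le {a : A} {m n : ℕ} (hn : n ≠ 0) (ha : ‖a ^ m‖₊ ≤ c ^ m) :
      ‖a ^ (m * n)‖₊ ≤ c ^ (m * n) := by
    rw [pow_mul, pow_mul]
    exact (nnnorm_pow_le' _ (Nat.pos_of_ne_zero hn)).trans (pow_le_pow_left' ha n)
  refine hK.induction_on (p := fun S ↦ ∃ n ≠ 0, ∀ x ∈ S, ‖F x ^ n‖₊ ≤ c ^ n)
    ⟨1, one_ne_zero, by simp⟩ ?mono ?union ?nhds
  case mono =>
    rintro s t hst ⟨n, hn, ht⟩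
    exact ⟨n, hn, fun x hx ↦ ht x (hst hx)⟩
  -- Exponents that work on two patches have a product that works on both.
  case union =>
    rintro s t ⟨m, hm, hs⟩ ⟨n, hn, ht⟩
    refine ⟨m * n, mul_ne_zero hm hn, ?_⟩
    rintro x (hx | hx)
    · exact pow_mul_le hn (hs x hx)
    · rw [mul_comm]
      exact pow_mul_le hm (ht x hx)
  case nhds =>
    intro x hx
    obtain ⟨n, hn, hlt⟩ := exists_nnnorm_pow_lt_of_spectralRadius_lt (h x hx)
    have hcont : ContinuousWithinAt (fun x ↦ ‖F x ^ n‖₊) K x := ((hF x hx).pow n).nnnorm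
    exact ⟨_, hcont.eventually_lt_const hlt, n, hn, fun y hy ↦ le_of_lt hy⟩

theorem spectralRadius_le_of_forall_mem_frontier {U : Set ℂ} (hU : Bornology.IsBounded U)
    {F : ℂ → A} (hF : DiffContOnCl ℂ F U) {c : ℝ≥0∞}
    (h : ∀ z ∈ frontier U, spectralRadius ℂ (F z) ≤ c) {z : ℂ} (hz : z ∈ closure U) :
    spectralRadius ℂ (F z) ≤ c := by
  refine le_of_forall_gt_imp_ge_of_dense fun d hcd ↦ ?_
  obtain ⟨e, hce, hed⟩ := ENNReal.lt_iff_exists_nnreal_btwn.1 hcd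
  have hcompact : IsCompact (frontier U) :=
    Metric.isCompact_of_isClosed_isBounded isClosed_frontier
      (hU.closure.subset frontier_subset_closure)
  obtain ⟨n, hn, hpow⟩ := exists_forall_nnnorm_pow_le_of_isCompact hcompact
    (hF.continuousOn.mono frontier_subset_closure) fun w hw ↦ (h w hw).trans_lt hce
  refine (spectralRadius_le_of_nnnorm_pow_le hn ?_).trans hed.le
  exact Complex.norm_le_of_forall_mem_frontier_norm_le hU
    ⟨hF.differentiableOn.pow n, hF.continuousOn.pow n⟩ hpow hz

theorem spectralRadius_le_of_forall_mem_frontier_of_eventually_cobounded {U : Set ℂ}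
    {F : ℂ → A} (hF : DiffContOnCl ℂ F U) {c : ℝ≥0∞}
    (h : ∀ z ∈ frontier U, spectralRadius ℂ (F z) ≤ c)
    (hinf : ∀ᶠ z in Bornology.cobounded ℂ, spectralRadius ℂ (F z) ≤ c) {z : ℂ} (hz : z ∈ U) :
    spectralRadius ℂ (F z) ≤ c := by
  obtain ⟨R, -, hR⟩ := (Metric.hasBasis_cobounded_compl_ball (0 : ℂ)).eventually_iff.1 hinf
  set S := max R (‖z‖ + 1)
  have hzS : z ∈ Metric.ball 0 S := by
    rw [mem_ball_zero_iff]
    exact (lt_add_one _).trans_le (le_max_right _ _)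
  refine spectralRadius_le_of_forall_mem_frontier
    (Metric.isBounded_ball.subset (Set.inter_subset_right (s := U) (t := Metric.ball 0 S)))
    (hF.mono Set.inter_subset_left) (fun w hw ↦ ?_) (subset_closure ⟨hz, hzS⟩)
  rcases frontier_inter_subset _ _ hw with ⟨hw, -⟩ | ⟨-, hw⟩
  · exact h w hw
  · have hwS : ‖w‖ = S := mem_sphere_zero_iff_norm.1 (Metric.frontier_ball_subset_sphere hw)
    refine hR ?_
    simp only [Set.mem_compl_iff, mem_ball_zero_iff, not_lt, hwS]
    exact le_max_left _ _

-- Apply the maximum principle to `z⁻¹ • F z ^ n`: the factor `z⁻¹` forces decay at infinity, and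
-- its cost `‖z‖ / δ` disappears after taking `n`-th roots and letting `n → ∞`.
theorem spectralRadius_pow_le_nnnorm_mul {F : ℂ → A} (hF : Differentiable ℂ F) {K c δ : ℝ≥0}
    (hK : ∀ z, spectralRadius ℂ (F z) ≤ K) (hc : 0 < c) (hδ : 0 < δ)
    (hsphere : ∀ z : ℂ, ‖z‖₊ = δ → spectralRadius ℂ (F z) ≤ c) {z : ℂ} (hz : δ < ‖z‖₊)
    {n : ℕ} (hn : n ≠ 0) : spectralRadius ℂ (F z) ^ n ≤ (‖z‖₊ * δ⁻¹ : ℝ≥0) * (c : ℝ≥0∞) ^ n := by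
  have closure_subset : closure (Metric.closedBall (0 : ℂ) δ)ᶜ ⊆ {0}ᶜ := by
    rw [closure_compl, Set.compl_subset_compl, Set.singleton_subset_iff]
    exact mem_interior_iff_mem_nhds.2 (Metric.closedBall_mem_nhds 0 hδ)
  have differentiableOn : DifferentiableOn ℂ (fun w ↦ w⁻¹ • F w ^ n) {0}ᶜ := fun w hw ↦
    ((differentiableAt_inv hw).smul ((hF w).pow n)).differentiableWithinAt
  have frontier_le (w : ℂ) (hw : w ∈ frontier (Metric.closedBall (0 : ℂ) δ)ᶜ) :
      spectralRadius ℂ (w⁻¹ • F w ^ n) ≤ (δ⁻¹ * c ^ n : ℝ≥0) := by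
    rw [frontier_compl] at hw
    have hwδ : ‖w‖₊ = δ :=
      NNReal.eq (mem_sphere_zero_iff_norm.1 (Metric.frontier_closedBall_subset_sphere hw))
    rw [spectralRadius_inv_smul_pow w _ hn, hwδ, ENNReal.coe_mul, ENNReal.coe_pow]
    gcongr
    exact hsphere w hwδ
  have inv_smul_le : spectralRadius ℂ (z⁻¹ • F z ^ n) ≤ (δ⁻¹ * c ^ n : ℝ≥0) :=
    spectralRadius_le_of_forall_mem_frontier_of_eventually_cobounded
      (differentiableOn.mono closure_subset).diffContOnCl frontier_le
      (eventually_cobounded_spectralRadius_inv_smul_pow_le hK (by positivity) hn)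
      fun hmem ↦ (mem_closedBall_zero_iff.1 hmem).not_gt hz
  calc spectralRadius ℂ (F z) ^ n
      = ‖z‖₊ * spectralRadius ℂ (z⁻¹ • F z ^ n) := by
        rw [spectralRadius_inv_smul_pow z _ hn, ← mul_assoc, ← ENNReal.coe_mul,
          mul_inv_cancel₀ (hδ.trans hz).ne', ENNReal.coe_one, one_mul]
    _ ≤ ‖z‖₊ * (δ⁻¹ * c ^ n : ℝ≥0) := by gcongr
    _ = (‖z‖₊ * δ⁻¹ : ℝ≥0) * (c : ℝ≥0∞) ^ n := by push_cast; ring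

theorem spectralRadius_le_of_forall_nnnorm_eq {F : ℂ → A} (hF : Differentiable ℂ F)
    {K c δ : ℝ≥0} (hK : ∀ z, spectralRadius ℂ (F z) ≤ K) (hc : 0 < c) (hδ : 0 < δ)
    (hsphere : ∀ z : ℂ, ‖z‖₊ = δ → spectralRadius ℂ (F z) ≤ c) (z : ℂ) :
    spectralRadius ℂ (F z) ≤ c := by
  rcases le_or_gt ‖z‖₊ δ with hz | hz
  · refine spectralRadius_le_of_forall_mem_frontier (U := Metric.ball 0 δ) Metric.isBounded_ball
      hF.diffContOnCl (fun w hw ↦ hsphere w ?_) ?_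
    · exact NNReal.eq (mem_sphere_zero_iff_norm.1 (Metric.frontier_ball_subset_sphere hw))
    · rw [closure_ball _ (by positivity)]
      exact mem_closedBall_zero_iff.2 hz
  · lift spectralRadius ℂ (F z) to ℝ≥0 using ne_top_of_le_ne_top ENNReal.coe_ne_top (hK z)
      with r hr
    have pow_le (n : ℕ) (hn : n ≠ 0) : r ^ n ≤ ‖z‖₊ * δ⁻¹ * c ^ n := by
      have := spectralRadius_pow_le_nnnorm_mul hF hK hc hδ hsphere hz hn
      rw [← hr] at this
      exact_mod_cast this
    exact_mod_cast le_of_forall_pow_le_mul_pow hc pow_le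

theorem spectralRadius_apply_eq_of_bounded {F : ℂ → A} (hF : Differentiable ℂ F) {K : ℝ≥0}
    (hK : ∀ z, spectralRadius ℂ (F z) ≤ K) (z w : ℂ) :
    spectralRadius ℂ (F z) = spectralRadius ℂ (F w) := by
  suffices le : ∀ z w, spectralRadius ℂ (F z) ≤ spectralRadius ℂ (F w) from
    (le z w).antisymm (le w z)
  intro z w
  refine le_of_forall_gt_imp_ge_of_dense fun d hd ↦ ?_
  obtain ⟨c, hc, hcd⟩ := ENNReal.lt_iff_exists_nnreal_btwn.1 hd
  have hshift : Differentiable ℂ fun ζ ↦ F (ζ + w) := hF.comp (by fun_prop)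
  have hnhds : ∀ᶠ ζ in 𝓝 (0 : ℂ), spectralRadius ℂ (F (ζ + w)) < c := by
    refine hshift.continuous.continuousAt.eventually (upperSemicontinuous_spectralRadius _ _ ?_)
    simpa only [zero_add] using hc
  obtain ⟨δ, hδ, hball⟩ := (Metric.nhds_basis_closedBall (x := (0 : ℂ))).eventually_iff.1 hnhds
  lift δ to ℝ≥0 using hδ.le
  have := spectralRadius_le_of_forall_nnnorm_eq hshift (fun ζ ↦ hK _)
    (ENNReal.coe_pos.1 (zero_le.trans_lt hc)) hδ
    (fun ζ hζ ↦ (hball (by simpa using (congrArg NNReal.toReal hζ).le)).le) (z - w)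
  rw [sub_add_cancel] at this
  exact this.trans hcd.le

end Subharmonicity

section Jacobson

theorem mem_spectrum_of_sub_algebraMap_mem {R A : Type*} [CommRing R] [Ring A] [Algebra R A]
    {L : Ideal A} (hL : L ≠ ⊤) {a : A} {k : R} (h : a - algebraMap R A k ∈ L) :
    k ∈ spectrum R a := by
  intro hunit
  refine hL (L.eq_top_of_isUnit_mem (L.neg_mem h) ?_)
  rwa [neg_sub]

theorem units_conj_sub_sub_mem {A : Type*} [Ring A] {L : Ideal A} {b x t : A} (hx : x ∈ L)
    (hxb : x * b - 1 ∈ L) {u : Aˣ} (hu : (u : A) = 1 + t * x) : u * b * ↑u⁻¹ - b - t ∈ L := by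
  set y : A := u * b * ↑u⁻¹ - b - t with hy
  have mul_unit : y * u = t * (x * b - 1) - (b * t + t * t) * x := by
    rw [hy, sub_mul, sub_mul, Units.inv_mul_cancel_right, hu]
    noncomm_ring
  have eq_sub : y = y * u - y * t * x := by
    rw [hu]
    noncomm_ring
  rw [eq_sub, mul_unit]
  exact L.sub_mem (L.sub_mem (L.mul_mem_left _ hxb) (L.mul_mem_left _ hx)) (L.mul_mem_left _ hx)

theorem exists_eq_smul_of_isSimpleModule {R V : Type*} [Ring R] [Algebra ℂ R]
    [NormedAddCommGroup V] [NormedSpace ℂ V] [CompleteSpace V] [Module R V] [IsScalarTower ℂ R V]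
    [IsSimpleModule R V] (f : V →ₗ[R] V) (hf : Continuous f) : ∃ k : ℂ, ∀ v, f v = k • v := by
  have : SMulCommClass R ℂ V := IsScalarTower.to_smulCommClass'
  have : Nontrivial V := IsSimpleModule.nontrivial R V
  let fc : V →L[ℂ] V := ⟨f.restrictScalars ℂ, hf⟩
  obtain ⟨k, hk⟩ := spectrum.nonempty fc
  rcases LinearMap.bijective_or_eq_zero (k • LinearMap.id - f) with hbij | hzero
  · exact (hk (ContinuousLinearMap.isUnit_iff_bijective.2 hbij)).elim
  · exact ⟨k, fun v ↦ (sub_eq_zero.1 (LinearMap.congr_fun hzero v)).symm⟩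

variable {A : Type*} [NormedRing A] [NormedAlgebra ℂ A] [CompleteSpace A]

theorem exists_sub_algebraMap_mem_of_isMaximal {L : Ideal A} [L.IsMaximal] {b : A}
    (hb : ∀ l ∈ L, l * b ∈ L) : ∃ k : ℂ, b - algebraMap ℂ A k ∈ L := by
  have : IsSimpleModule A (A ⧸ L) := isSimpleModule_iff_isCoatom.2 Ideal.IsMaximal.out
  let f : A ⧸ L →ₗ[A] A ⧸ L := L.mapQ L (LinearMap.toSpanSingleton A A b) hb
  have f_mk (a : A) : f (L.mkQ a) = L.mkQ (a * b) := rfl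
  have hf : Continuous f := L.isOpenQuotientMap_mkQ.isQuotientMap.continuous_iff.2
    (L.isOpenQuotientMap_mkQ.continuous.comp (continuous_mul_const b))
  obtain ⟨k, hk⟩ := exists_eq_smul_of_isSimpleModule f hf
  refine ⟨k, (Submodule.Quotient.eq L).1 ?_⟩
  calc L.mkQ b = f (L.mkQ 1) := by rw [f_mk, one_mul]
    _ = k • L.mkQ 1 := hk _
    _ = L.mkQ (algebraMap ℂ A k) := by rw [Algebra.algebraMap_eq_smul_one]; rfl

theorem exists_units_eq_one_add_smul (x : A) :
    ∃ t : ℂ, t ≠ 0 ∧ ∃ u : Aˣ, (u : A) = 1 + t • x := by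
  have hcont : Continuous fun t : ℂ ↦ 1 + t • x := by fun_prop
  have hunit : ∀ᶠ t in 𝓝[≠] (0 : ℂ), IsUnit (1 + t • x) :=
    (hcont.isOpen_preimage _ Units.isOpen).mem_nhds (by simp) |> nhdsWithin_le_nhds
  obtain ⟨t, ⟨u, hu⟩, ht⟩ := (hunit.and eventually_mem_nhdsWithin).exists
  exact ⟨t, ht, u, hu⟩

theorem mem_of_spectralRadius_units_conj_sub_eq_zero {L : Ideal A} [hL : L.IsMaximal] {b : A}
    (h0 : spectralRadius ℂ b = 0)
    (hconj : ∀ u : Aˣ, spectralRadius ℂ (u * b * ↑u⁻¹ - b) = 0) : b ∈ L := by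
  have eq_zero_of_sub_mem {a : A} {k : ℂ} (ha : spectralRadius ℂ a = 0)
      (hk : a - algebraMap ℂ A k ∈ L) : k = 0 := by
    have : (‖k‖₊ : ℝ≥0∞) ≤ spectralRadius ℂ a :=
      le_iSup₂ (f := fun k _ ↦ (‖k‖₊ : ℝ≥0∞)) k (mem_spectrum_of_sub_algebraMap_mem hL.ne_top hk)
    simpa [ha] using this
  by_cases hb : ∀ l ∈ L, l * b ∈ L
  · obtain ⟨k, hk⟩ := exists_sub_algebraMap_mem_of_isMaximal hb
    rwa [eq_zero_of_sub_mem h0 hk, map_zero, sub_zero] at hk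
  · push Not at hb
    obtain ⟨l, hl, hlb⟩ := hb
    obtain ⟨c, i, hi, hci⟩ := hL.exists_inv hlb
    obtain ⟨t, ht, u, hu⟩ := exists_units_eq_one_add_smul (c * l)
    refine absurd (eq_zero_of_sub_mem (hconj u)
      (units_conj_sub_sub_mem (L.mul_mem_left c hl) ?_ ?_)) ht
    · rw [← hci, mul_assoc, sub_add_cancel_left]
      exact L.neg_mem hi
    · rw [hu, Algebra.smul_def]

theorem mem_jacobson_of_forall_spectralRadius_add_eq {b : A}
    (h : ∀ y, spectralRadius ℂ (b + y) = spectralRadius ℂ y) : b ∈ Ring.jacobson A := by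
  have h0 : spectralRadius ℂ b = 0 := by
    rw [← add_zero b, h, spectrum.spectralRadius_zero]
  rw [Ring.jacobson_eq_sInf_isMaximal, Ideal.mem_sInf]
  intro L hL
  have : L.IsMaximal := hL
  refine mem_of_spectralRadius_units_conj_sub_eq_zero h0 fun u ↦ ?_
  rw [← h, add_sub_cancel, spectralRadius_units_conjugate, h0]

theorem mem_jacobson_of_spectralRadius_smul_add_le {b : A}
    (h : ∀ y, ∃ K : ℝ≥0, ∀ z : ℂ, spectralRadius ℂ (z • b + y) ≤ K) : b ∈ Ring.jacobson A := by
  refine mem_jacobson_of_forall_spectralRadius_add_eq fun y ↦ ?_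
  obtain ⟨K, hK⟩ := h y
  have := spectralRadius_apply_eq_of_bounded (by fun_prop) hK 1 0
  simpa only [one_smul, zero_smul, zero_add] using this

end Jacobson

theorem quotient_norm_mul_le {A : Type*} [SeminormedRing A] (I : Ideal A) [I.IsTwoSided]
    (x y : A ⧸ I) : ‖x * y‖ ≤ ‖x‖ * ‖y‖ := by
  refine le_mul_of_forall_lt₀ fun r hr s hs ↦ ?_
  obtain ⟨a, rfl, ha⟩ := Submodule.Quotient.norm_mk_lt x (sub_pos.2 hr)
  obtain ⟨b, rfl, hb⟩ := Submodule.Quotient.norm_mk_lt y (sub_pos.2 hs)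
  rw [add_sub_cancel] at ha hb
  have hr_nonneg : 0 ≤ r := (norm_nonneg a).trans ha.le
  calc ‖Ideal.Quotient.mk I (a * b)‖
      ≤ ‖a * b‖ := Submodule.Quotient.norm_mk_le I (a * b)
    _ ≤ ‖a‖ * ‖b‖ := norm_mul_le a b
    _ ≤ r * s := by gcongr

/-- The quotient of a normed ring by a closed two-sided ideal, with the quotient norm. -/
noncomputable abbrev quotientNormedRing {A : Type*} [NormedRing A] (I : Ideal A) [I.IsTwoSided]
    [IsClosed (I : Set A)] : NormedRing (A ⧸ I) where
  __ := Submodule.Quotient.normedAddCommGroup I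
  __ := Ideal.Quotient.ring I
  norm_mul_le := quotient_norm_mul_le I

theorem mem_jacobson_of_surjective_of_isClosed_ker {A B : Type*} [NormedRing A] [NormedAlgebra ℂ A]
    [CompleteSpace A] [Ring B] [Algebra ℂ B] {π : A →ₐ[ℂ] B} (hπ : Function.Surjective π)
    (hker : IsClosed (RingHom.ker π : Set A)) {b : B}
    (h : ∀ y, ∃ K : ℝ≥0, ∀ z : ℂ, spectralRadius ℂ (z • b + y) ≤ K) : b ∈ Ring.jacobson B := by
  have : IsClosed (RingHom.ker π : Set A) := hker
  let _ : NormedRing (A ⧸ RingHom.ker π) := quotientNormedRing _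
  let _ : NormedAlgebra ℂ (A ⧸ RingHom.ker π) :=
    { Submodule.Quotient.normedSpace (RingHom.ker π) ℂ, Ideal.Quotient.algebra ℂ with }
  let e : (A ⧸ RingHom.ker π) ≃ₐ[ℂ] B := Ideal.quotientKerAlgEquivOfSurjective hπ
  have mem : e.symm b ∈ Ring.jacobson (A ⧸ RingHom.ker π) := by
    refine mem_jacobson_of_spectralRadius_smul_add_le fun y ↦ ?_
    obtain ⟨K, hK⟩ := h (e y)
    refine ⟨K, fun z ↦ ?_⟩
    have : z • e.symm b + y = e.symm (z • b + e y) := by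
      rw [map_add, map_smul, e.symm_apply_apply]
    rw [this]
    exact (spectralRadius_algHom_apply_le e.symm.toAlgHom _).trans (hK z)
  have : RingHomSurjective (e : (A ⧸ RingHom.ker π) →+* B) := ⟨e.surjective⟩
  rw [← e.apply_symm_apply b]
  exact Ring.le_comap_jacobson (e : (A ⧸ RingHom.ker π) →+* B) mem

theorem apply_mem_jacobson_of_spectralRadius_le {A B V D : Type*} [NormedRing B]
    [NormedAlgebra ℂ B] [CompleteSpace B] [Ring D] [Algebra ℂ D] [Ring A] [Algebra ℂ A]
    [AddCommGroup V] [Module ℂ V] {π : B →ₐ[ℂ] D} (hπ : Function.Surjective π)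
    (hker : IsClosed (RingHom.ker π : Set B)) {p : V →ₗ[ℂ] A} {S : V →ₗ[ℂ] D}
    (hS : Function.Surjective S) {M : ℝ≥0} (hfin : ∀ v, spectralRadius ℂ (p v) ≠ ⊤)
    (hbdd : ∀ v, spectralRadius ℂ (S v) ≤ M * spectralRadius ℂ (p v)) {v : V} (hv : p v = 0) :
    S v ∈ Ring.jacobson D := by
  refine mem_jacobson_of_surjective_of_isClosed_ker hπ hker (hS.forall.2 fun w ↦ ?_)
  refine ⟨M * (spectralRadius ℂ (p w)).toNNReal, fun z ↦ ?_⟩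
  calc spectralRadius ℂ (z • S v + S w)
      = spectralRadius ℂ (S (z • v + w)) := by rw [map_add, map_smul]
    _ ≤ M * spectralRadius ℂ (p (z • v + w)) := hbdd _
    _ = M * spectralRadius ℂ (p w) := by rw [map_add, map_smul, hv, smul_zero, zero_add]
    _ = (M * (spectralRadius ℂ (p w)).toNNReal : ℝ≥0) := by
      rw [ENNReal.coe_mul, ENNReal.coe_toNNReal (hfin w)]

/-- The quotient map of a complex algebra by a two-sided ideal, as an algebra homomorphism. -/
noncomputable def quotientMkAlgHom {A : Type*} [Ring A] [Algebra ℂ A] (I : TwoSidedIdeal A) :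
    A →ₐ[ℂ] I.ringCon.Quotient :=
  { I.ringCon.mk' with commutes' := fun _ ↦ rfl }

theorem ringCon_mk'_eq_zero_iff {A : Type*} [Ring A] (I : TwoSidedIdeal A) {x : A} :
    I.ringCon.mk' x = 0 ↔ x ∈ I := by
  rw [← TwoSidedIdeal.mem_ker, TwoSidedIdeal.ker_ringCon_mk']

theorem spectralRadius_ringCon_mk'_ne_top {A : Type*} [NormedRing A] [NormedAlgebra ℂ A]
    [CompleteSpace A] (I : TwoSidedIdeal A) (x : A) : spectralRadius ℂ (I.ringCon.mk' x) ≠ ⊤ :=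
  ne_top_of_le_ne_top ENNReal.coe_ne_top
    ((spectralRadius_algHom_apply_le (quotientMkAlgHom I) x).trans
      (spectralRadius_le_nnnorm_of_complete x))

theorem mem_twoSidedIdeal_jacobson_bot_iff {R : Type*} [Ring R] {x : R} :
    x ∈ (⊥ : TwoSidedIdeal R).jacobson ↔ x ∈ Ring.jacobson R := by
  rw [← TwoSidedIdeal.mem_asIdeal, TwoSidedIdeal.asIdeal_jacobson, TwoSidedIdeal.bot_asIdeal,
    Ideal.jacobson_bot]

theorem essentially_spectrally_bounded_maps_ideal_into_radical_general
    {A B : Type*} [Ring A] [Algebra ℂ A] [NormedRing B] [NormedAlgebra ℂ B] [CompleteSpace B]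
    (I : TwoSidedIdeal A) (J : TwoSidedIdeal B) (hJclosed : IsClosed (J : Set B))
    (T : A →ₗ[ℂ] B) (M : ℝ≥0)
    (hfinite : ∀ x : A, spectralRadius ℂ (I.ringCon.mk' x) ≠ ⊤)
    (hessbdd : ∀ x : A,
      spectralRadius ℂ (J.ringCon.mk' (T x)) ≤ (M : ℝ≥0∞) * spectralRadius ℂ (I.ringCon.mk' x))
    (hsurjmod : ∀ y : B, ∃ x : A, y - T x ∈ J) :
    (∀ x ∈ I, J.ringCon.mk' (T x) ∈ (⊥ : TwoSidedIdeal J.ringCon.Quotient).jacobson) ∧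
    ((⊥ : TwoSidedIdeal J.ringCon.Quotient).jacobson = ⊥ → ∀ x ∈ I, T x ∈ J) := by
  let q := quotientMkAlgHom J
  have q_surjective : Function.Surjective q := J.ringCon.mk'_surjective
  have ker_eq : (RingHom.ker q : Set B) = J := Set.ext fun _ ↦ ringCon_mk'_eq_zero_iff J
  have qT_surjective : Function.Surjective (q.toLinearMap ∘ₗ T) := q_surjective.forall.2 fun y ↦ by
    obtain ⟨x, hx⟩ := hsurjmod y
    have : q (y - T x) = 0 := (ringCon_mk'_eq_zero_iff J).2 hx
    exact ⟨x, (sub_eq_zero.1 ((map_sub q y (T x)).symm.trans this)).symm⟩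
  have mem_jacobson (x : A) (hx : x ∈ I) :
      J.ringCon.mk' (T x) ∈ (⊥ : TwoSidedIdeal J.ringCon.Quotient).jacobson :=
    mem_twoSidedIdeal_jacobson_bot_iff.2 <|
      apply_mem_jacobson_of_spectralRadius_le (p := (quotientMkAlgHom I).toLinearMap)
        q_surjective (ker_eq ▸ hJclosed) qT_surjective hfinite hessbdd
        ((ringCon_mk'_eq_zero_iff I).2 hx)
  refine ⟨mem_jacobson, fun hsemisimple x hx ↦ (ringCon_mk'_eq_zero_iff J).1 ?_⟩
  rw [← TwoSidedIdeal.mem_bot, ← hsemisimple]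
  exact mem_jacobson x hx

/-- If `T` is essentially spectrally bounded and surjective modulo `J`, then for `x ∈ I`
the coset `Tx + J` lies in the Jacobson radical of `B/J`; in particular if `B/J` is
semisimple then `T I ⊆ J`. -/
theorem essentially_spectrally_bounded_maps_ideal_into_radical
    {A B : Type*}
    [NormedRing A] [NormedAlgebra ℂ A] [CompleteSpace A] [NormOneClass A]
    [NormedRing B] [NormedAlgebra ℂ B] [CompleteSpace B] [NormOneClass B]
    (hBsemisimple : (⊥ : TwoSidedIdeal B).jacobson = ⊥)
    (I : TwoSidedIdeal A) (J : TwoSidedIdeal B)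
    (hIclosed : IsClosed (I : Set A)) (hJclosed : IsClosed (J : Set B))
    (hIproper : I ≠ ⊤) (hJproper : J ≠ ⊤)
    (T : A →ₗ[ℂ] B) (M : ℝ≥0)
    (hessbdd : ∀ x : A,
      spectralRadius ℂ (J.ringCon.mk' (T x)) ≤ (M : ℝ≥0∞) * spectralRadius ℂ (I.ringCon.mk' x))
    (hsurjmod : ∀ y : B, ∃ x : A, y - T x ∈ J) :
    (∀ x ∈ I, J.ringCon.mk' (T x) ∈ (⊥ : TwoSidedIdeal J.ringCon.Quotient).jacobson) ∧
    ((⊥ : TwoSidedIdeal J.ringCon.Quotient).jacobson = ⊥ → ∀ x ∈ I, T x ∈ J) := by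
  exact essentially_spectrally_bounded_maps_ideal_into_radical_general I J hJclosed T M
    (spectralRadius_ringCon_mk'_ne_top I) hessbdd hsurjmod
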